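/- (Step Lemma) Suppose f:[a,b]→ℝ is measurable, K ⊆ [a,b] is closed, and (a,b)−K = ⊔ₙ (cₙ,dₙ) (a disjoint union of countably many open intervals). Suppose further that f·χ_K is Lebesgue integrable on [a,b], that f·χ_{[cₙ,dₙ]} ∈ Den[a,b] for each n, and that ∑ₙ ω(Fₙ,[cₙ,dₙ]) < ∞ where Fₙ(x) = ∫_{cₙ}^x f (Denjoy integral) on [cₙ,dₙ]. Then f ∈ Den[a,b] and ∫_a^b f = ∫_K f + ∑ₙ ∫_{cₙ}^{dₙ} f. -/

import Mathlib

open MeasureTheory Set Filter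

noncomputable section

attribute [local instance] Classical.propDecidable

/-- The oscillation `ω(F, J)` of `F` on the set `J`. -/
def osc (F : ℝ → ℝ) (J : Set ℝ) : ℝ :=
  sSup {d : ℝ | ∃ x ∈ J, ∃ y ∈ J, d = |F x - F y|}

/-- `D` is a `K`-edged pre-partition of `[a,b]`: a finite nonempty collection of
pairwise non-overlapping closed subintervals of `[a,b]` whose endpoints lie in `K`. -/
def IsPrePartition (a b : ℝ) (K : Set ℝ) (D : Finset (ℝ × ℝ)) : Prop :=
  D.Nonempty ∧
  (∀ p ∈ D, p.1 ≤ p.2 ∧ p.1 ∈ K ∧ p.2 ∈ K ∧ Icc p.1 p.2 ⊆ Icc a b) ∧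
  (D : Set (ℝ × ℝ)).Pairwise fun p q => p.2 ≤ q.1 ∨ q.2 ≤ p.1

/-- `F ∈ AC_*(K)`: absolute continuity in the restricted sense on `K`. -/
def ACStar (a b : ℝ) (F : ℝ → ℝ) (K : Set ℝ) : Prop :=
  ∀ ε > (0:ℝ), ∃ δ > (0:ℝ), ∀ D : Finset (ℝ × ℝ), IsPrePartition a b K D →
    (∑ p ∈ D, (p.2 - p.1)) < δ → (∑ p ∈ D, osc F (Icc p.1 p.2)) < ε

/-- `F ∈ ACG_*(K)`: `K` is a countable union of closed sets `Kₙ ⊆ [a,b]` with `F ∈ AC_*(Kₙ)`. -/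
def ACGStar (a b : ℝ) (F : ℝ → ℝ) (K : Set ℝ) : Prop :=
  ∃ C : ℕ → Set ℝ, (∀ n, IsClosed (C n) ∧ C n ⊆ Icc a b ∧ ACStar a b F (C n)) ∧
    K = ⋃ n, C n

/-- `F` is the indefinite Denjoy integral of `f` on `[a,b]`:
`F` is continuous on `[a,b]`, `F(a) = 0`, `F ∈ ACG_*([a,b])`, and `F' = f` a.e. on `[a,b]`. -/
def HasDenjoyIntegralFn (a b : ℝ) (f F : ℝ → ℝ) : Prop :=
  ContinuousOn F (Icc a b) ∧ F a = 0 ∧ ACGStar a b F (Icc a b) ∧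
    ∀ᵐ x ∂(volume.restrict (Icc a b)), HasDerivAt F (f x) x

/-- `f ∈ Den[a,b]`: `f` is Denjoy integrable on `[a,b]`. -/
def DenjoyIntegrable (a b : ℝ) (f : ℝ → ℝ) : Prop :=
  ∃ F : ℝ → ℝ, HasDenjoyIntegralFn a b f F

/-- The Denjoy integral `∫_a^b f` (junk value `0` if `f` is not Denjoy integrable). -/
def denjoyIntegral (a b : ℝ) (f : ℝ → ℝ) : ℝ :=
  if h : DenjoyIntegrable a b f then Classical.choose h b else 0

/-!
Let `Φ i` be the Denjoy primitive on the gap `[c i, d i]`, extended by constants to the left and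
right of the gap. The primitive of `f` on `[a, b]` is `F x = (∫ t in a..x, K.indicator f t) + S x`
with `S = ∑ i, Φ i`, which up to a constant equals `Φ i` on the `i`-th gap. Off the gaps, `S` has
two properties. It is `AC_*` there: an interval with both endpoints off the gaps contains every gap
that it meets, so intervals of small total length meet only short gaps, and these carry a tail of
the summable oscillations. And `S' = 0` almost everywhere there: an increment of `S` from a point
off the gaps to a point at distance `r` is at most the mass, in the ball of radius `r`, of a finite
measure carried by the endpoints of the gaps, and such a measure has density zero almost everywhere.

That `F b` is the integral is uniqueness of Denjoy primitives: the difference of two primitives has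
derivative zero off a null set, so by Sard and by Lusin's condition (N), which `ACG_*` implies, its
image is a null interval.
-/

section Oscillation

variable {F G : ℝ → ℝ} {J : Set ℝ} {p q x y : ℝ}

lemma osc_nonneg (F : ℝ → ℝ) (J : Set ℝ) : 0 ≤ osc F J := by
  refine Real.sSup_nonneg ?_
  rintro _ ⟨x, -, y, -, rfl⟩
  exact abs_nonneg _

lemma osc_le {B : ℝ} (hB : 0 ≤ B) (h : ∀ x ∈ J, ∀ y ∈ J, |F x - F y| ≤ B) : osc F J ≤ B := by
  refine Real.sSup_le ?_ hB
  rintro _ ⟨x, hx, y, hy, rfl⟩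
  exact h x hx y hy

lemma abs_sub_le_osc (hF : ContinuousOn F (Icc p q)) (hx : x ∈ Icc p q) (hy : y ∈ Icc p q) :
    |F x - F y| ≤ osc F (Icc p q) := by
  obtain ⟨B, hB⟩ := isCompact_Icc.exists_bound_of_continuousOn hF
  refine le_csSup ⟨B + B, ?_⟩ ⟨x, hx, y, hy, rfl⟩
  rintro _ ⟨x, hx, y, hy, rfl⟩
  exact (abs_sub _ _).trans (add_le_add (hB x hx) (hB y hy))

lemma osc_congr (h : ∀ x ∈ J, ∀ y ∈ J, F x - F y = G x - G y) : osc F J = osc G J := by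
  have (d : ℝ) : (∃ x ∈ J, ∃ y ∈ J, d = |F x - F y|) ↔ ∃ x ∈ J, ∃ y ∈ J, d = |G x - G y| := by
    refine exists_congr fun x => and_congr_right fun hx => exists_congr fun y =>
      and_congr_right fun hy => ?_
    rw [h x hx y hy]
  simp only [osc, this]

lemma osc_eq_zero_of_le (F : ℝ → ℝ) (h : q ≤ p) : osc F (Icc p q) = 0 := by
  refine le_antisymm (osc_le le_rfl fun x hx y hy => ?_) (osc_nonneg _ _)
  rw [subsingleton_Icc_of_ge h hx hy, sub_self, abs_zero]

lemma exists_osc_le_abs_sub (hpq : p ≤ q) (hF : ContinuousOn F (Icc p q)) :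
    ∃ x ∈ Icc p q, ∃ y ∈ Icc p q, osc F (Icc p q) ≤ |F x - F y| := by
  have hcont : ContinuousOn (fun z : ℝ × ℝ => |F z.1 - F z.2|) (Icc p q ×ˢ Icc p q) :=
    ((hF.comp continuousOn_fst fun _ hz => hz.1).sub
      (hF.comp continuousOn_snd fun _ hz => hz.2)).abs
  have hp : p ∈ Icc p q := left_mem_Icc.2 hpq
  obtain ⟨⟨x, y⟩, ⟨hx, hy⟩, hmax⟩ :=
    (isCompact_Icc.prod isCompact_Icc).exists_isMaxOn ⟨(p, p), hp, hp⟩ hcont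
  exact ⟨x, hx, y, hy, osc_le (abs_nonneg _) fun u hu v hv => hmax (a := (u, v)) ⟨hu, hv⟩⟩

lemma volume_image_Icc_le_osc (hF : ContinuousOn F (Icc p q)) :
    volume (F '' Icc p q) ≤ ENNReal.ofReal (osc F (Icc p q)) := by
  refine (Real.volume_le_diam _).trans (Metric.ediam_le_of_forall_dist_le ?_)
  rintro _ ⟨x, hx, rfl⟩ _ ⟨y, hy, rfl⟩
  exact abs_sub_le_osc hF hx hy

end Oscillation

section ACStar

variable {a b a' b' : ℝ} {F G H : ℝ → ℝ} {C C' : Set ℝ}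

lemma IsPrePartition.mono {D : Finset (ℝ × ℝ)} (hD : IsPrePartition a b C D) (hC : C ⊆ C')
    (hC' : C ⊆ Icc a' b') : IsPrePartition a' b' C' D :=
  ⟨hD.1, fun p hp =>
    have ⟨hle, hp₁, hp₂, _⟩ := hD.2.1 p hp
    ⟨hle, hC hp₁, hC hp₂, Icc_subset_Icc (hC' hp₁).1 (hC' hp₂).2⟩, hD.2.2⟩

lemma ACStar.mono (hF : ACStar a b F C) (hC : C' ⊆ C) (hC' : C' ⊆ Icc a b) :
    ACStar a' b' F C' := fun ε hε =>
  have ⟨δ, hδ, h⟩ := hF ε hε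
  ⟨δ, hδ, fun D hD => h D (hD.mono hC hC')⟩

lemma ACStar.congr (hF : ACStar a b F C)
    (h : ∀ x ∈ Icc a b, ∀ y ∈ Icc a b, G x - G y = F x - F y) : ACStar a b G C := by
  intro ε hε
  obtain ⟨δ, hδ, hF⟩ := hF ε hε
  refine ⟨δ, hδ, fun D hD hlen => lt_of_eq_of_lt (Finset.sum_congr rfl fun p hp => ?_)
    (hF D hD hlen)⟩
  have hsub := (hD.2.1 p hp).2.2.2
  exact osc_congr fun x hx y hy => h x (hsub hx) y (hsub hy)

lemma ACStar.of_abs_sub_le_add (hFc : ContinuousOn F (Icc a b)) (hGc : ContinuousOn G (Icc a b))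
    (hF : ACStar a b F C) (hG : ACStar a b G C)
    (hH : ∀ x ∈ Icc a b, ∀ y ∈ Icc a b, |H x - H y| ≤ |F x - F y| + |G x - G y|) :
    ACStar a b H C := by
  intro ε hε
  obtain ⟨δ₁, hδ₁, hF⟩ := hF (ε / 2) (half_pos hε)
  obtain ⟨δ₂, hδ₂, hG⟩ := hG (ε / 2) (half_pos hε)
  refine ⟨min δ₁ δ₂, lt_min hδ₁ hδ₂, fun D hD hlen => ?_⟩
  have hosc : ∀ p ∈ D,
      osc H (Icc p.1 p.2) ≤ osc F (Icc p.1 p.2) + osc G (Icc p.1 p.2) := fun p hp => by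
    have hsub := (hD.2.1 p hp).2.2.2
    exact osc_le (add_nonneg (osc_nonneg _ _) (osc_nonneg _ _)) fun x hx y hy =>
      (hH x (hsub hx) y (hsub hy)).trans (add_le_add
        (abs_sub_le_osc (hFc.mono hsub) hx hy) (abs_sub_le_osc (hGc.mono hsub) hx hy))
  calc ∑ p ∈ D, osc H (Icc p.1 p.2)
      ≤ ∑ p ∈ D, osc F (Icc p.1 p.2) + ∑ p ∈ D, osc G (Icc p.1 p.2) := by
        rw [← Finset.sum_add_distrib]
        exact Finset.sum_le_sum hosc
    _ < ε / 2 + ε / 2 := add_lt_add (hF D hD (hlen.trans_le (min_le_left _ _)))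
        (hG D hD (hlen.trans_le (min_le_right _ _)))
    _ = ε := add_halves ε

lemma ACStar.add (hFc : ContinuousOn F (Icc a b)) (hGc : ContinuousOn G (Icc a b))
    (hF : ACStar a b F C) (hG : ACStar a b G C) : ACStar a b (fun x => F x + G x) C :=
  hF.of_abs_sub_le_add hFc hGc hG fun x _ y _ => by
    rw [add_sub_add_comm]
    exact abs_add_le _ _

lemma ACStar.sub (hFc : ContinuousOn F (Icc a b)) (hGc : ContinuousOn G (Icc a b))
    (hF : ACStar a b F C) (hG : ACStar a b G C) : ACStar a b (fun x => F x - G x) C :=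
  hF.of_abs_sub_le_add hFc hGc hG fun x _ y _ => by
    rw [sub_sub_sub_comm]
    exact abs_sub _ _

lemma acStar_empty (a b : ℝ) (F : ℝ → ℝ) : ACStar a b F ∅ := fun _ _ =>
  ⟨1, one_pos, fun _ hD _ =>
    have ⟨p, hp⟩ := hD.1
    absurd (hD.2.1 p hp).2.1 (notMem_empty _)⟩

lemma ACStar.exists_forall_sum_osc_lt (hF : ACStar a b F C) (hC : C ⊆ Icc a b) {ε : ℝ}
    (hε : 0 < ε) : ∃ δ > 0, ∀ {ι : Type} (T : Finset ι) (l r : ι → ℝ),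
      (∀ i ∈ T, l i ≤ r i ∧ l i ∈ C ∧ r i ∈ C) →
      (T : Set ι).Pairwise (fun i j => r i ≤ l j ∨ r j ≤ l i) →
      ∑ i ∈ T, (r i - l i) < δ → ∑ i ∈ T, osc F (Icc (l i) (r i)) < ε := by
  obtain ⟨δ, hδ, hF⟩ := hF ε hε
  refine ⟨δ, hδ, fun {ι} T l r hmem hsep hlen => ?_⟩
  rcases T.eq_empty_or_nonempty with rfl | hT
  · simpa using hε
  -- Distinct indices may give the same pair, but non-overlap then makes that pair degenerate.
  have hdeg : (T : Set ι).Pairwise fun i j => (l i, r i) = (l j, r j) → r i = l i := by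
    intro i hi j hj hij heq
    obtain ⟨hl, hr⟩ := Prod.mk.inj heq
    refine le_antisymm ?_ (hmem i hi).1
    rcases hsep hi hj hij with h | h <;> simpa only [hl, hr] using h
  have hlen' := Finset.sum_image_of_pairwise_eq_zero (g := fun p : ℝ × ℝ => p.2 - p.1)
    (hdeg.imp fun i j h heq => sub_eq_zero.2 (h heq))
  have hosc' := Finset.sum_image_of_pairwise_eq_zero (g := fun p : ℝ × ℝ => osc F (Icc p.1 p.2))
    (hdeg.imp fun i j h heq => osc_eq_zero_of_le F (h heq).le)
  rw [← hosc']
  refine hF _ ⟨hT.image _, ?_, ?_⟩ (hlen'.trans_lt hlen)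
  · simp only [Finset.forall_mem_image]
    intro i hi
    obtain ⟨hle, hl, hr⟩ := hmem i hi
    exact ⟨hle, hl, hr, Icc_subset_Icc (hC hl).1 (hC hr).2⟩
  · rw [Finset.coe_image]
    rintro _ ⟨i, hi, rfl⟩ _ ⟨j, hj, rfl⟩ hij
    exact hsep hi hj fun h => hij (by rw [h])

end ACStar

section ACGStar

variable {a b a' b' : ℝ} {F G : ℝ → ℝ} {K K' : Set ℝ}

lemma ACGStar.of_countable {κ : Type*} [Countable κ] {C : κ → Set ℝ}
    (hC : ∀ k, IsClosed (C k) ∧ C k ⊆ Icc a b ∧ ACStar a b F (C k)) :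
    ACGStar a b F (⋃ k, C k) := by
  rcases isEmpty_or_nonempty κ with _ | _
  · exact ⟨fun _ => ∅, fun _ => ⟨isClosed_empty, empty_subset _, acStar_empty a b F⟩, by simp⟩
  · obtain ⟨e, he⟩ := exists_surjective_nat κ
    exact ⟨fun n => C (e n), fun n => hC (e n), (he.iUnion_comp C).symm⟩

lemma ACStar.acgStar (hF : ACStar a b F K) (hK : IsClosed K) (hKab : K ⊆ Icc a b) :
    ACGStar a b F K :=
  ⟨fun _ => K, fun _ => ⟨hK, hKab, hF⟩, (iUnion_const K).symm⟩

lemma ACGStar.iUnion {κ : Type*} [Countable κ] {K : κ → Set ℝ}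
    (hK : ∀ k, ACGStar a b F (K k)) : ACGStar a b F (⋃ k, K k) := by
  choose C hC hKC using hK
  have : ⋃ k, K k = ⋃ p : κ × ℕ, C p.1 p.2 := by
    rw [iUnion_prod']
    exact iUnion_congr hKC
  rw [this]
  exact .of_countable fun p => hC p.1 p.2

lemma ACGStar.union (hK : ACGStar a b F K) (hK' : ACGStar a b F K') :
    ACGStar a b F (K ∪ K') := by
  rw [union_eq_iUnion]
  exact .iUnion (Bool.forall_bool.2 ⟨hK', hK⟩)

lemma ACGStar.inter_isClosed (hF : ACGStar a b F K) (hK' : IsClosed K') :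
    ACGStar a b F (K ∩ K') := by
  obtain ⟨C, hC, rfl⟩ := hF
  rw [iUnion_inter]
  exact ⟨_, fun n => ⟨(hC n).1.inter hK', inter_subset_left.trans (hC n).2.1,
    (hC n).2.2.mono inter_subset_left (inter_subset_left.trans (hC n).2.1)⟩, rfl⟩

lemma ACGStar.change_interval (hF : ACGStar a b F K) (hK : K ⊆ Icc a' b') :
    ACGStar a' b' F K := by
  obtain ⟨C, hC, rfl⟩ := hF
  exact ⟨C, fun n => ⟨(hC n).1, (subset_iUnion C n).trans hK,
    (hC n).2.2.mono subset_rfl (hC n).2.1⟩, rfl⟩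

lemma ACGStar.congr (hF : ACGStar a b F K)
    (h : ∀ x ∈ Icc a b, ∀ y ∈ Icc a b, G x - G y = F x - F y) : ACGStar a b G K := by
  obtain ⟨C, hC, rfl⟩ := hF
  exact ⟨C, fun n => ⟨(hC n).1, (hC n).2.1, (hC n).2.2.congr h⟩, rfl⟩

lemma ACGStar.sub (hFc : ContinuousOn F (Icc a b)) (hGc : ContinuousOn G (Icc a b))
    (hF : ACGStar a b F K) (hG : ACGStar a b G K) : ACGStar a b (fun x => F x - G x) K := by
  obtain ⟨C, hC, hKC⟩ := hF
  obtain ⟨C', hC', hKC'⟩ := hG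
  have : K = ⋃ p : ℕ × ℕ, C p.1 ∩ C' p.2 := by
    rw [iUnion_prod', ← iUnion_inter_iUnion, ← hKC, ← hKC', inter_self]
  rw [this]
  refine .of_countable fun p => ?_
  have hsub : C p.1 ∩ C' p.2 ⊆ Icc a b := inter_subset_left.trans (hC p.1).2.1
  exact ⟨(hC p.1).1.inter (hC' p.2).1, hsub, .sub hFc hGc
    ((hC p.1).2.2.mono inter_subset_left hsub) ((hC' p.2).2.2.mono inter_subset_right hsub)⟩

end ACGStar

section OrdConnected

lemma ordConnected_forall_le_or_forall_le {α : Type*} [LinearOrder α] {s t : Set α}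
    (hs : s.OrdConnected) (ht : t.OrdConnected) (hst : Disjoint s t) :
    (∀ x ∈ s, ∀ y ∈ t, x ≤ y) ∨ (∀ y ∈ t, ∀ x ∈ s, y ≤ x) := by
  by_contra! ⟨⟨x, hx, y, hy, hyx⟩, y', hy', x', hx', hxy'⟩
  rcases le_total x y' with h | h
  · exact hst.notMem_of_mem_left hx (ht.out hy hy' ⟨hyx.le, h⟩)
  · exact hst.notMem_of_mem_left (hs.out hx' hx ⟨hxy'.le, h⟩) hy'

lemma csSup_le_csInf_or_of_ordConnected {α : Type*} [ConditionallyCompleteLinearOrder α]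
    {s t s' t' : Set α} (hs : s.OrdConnected) (ht : t.OrdConnected) (hst : Disjoint s t)
    (hs's : s' ⊆ s) (ht't : t' ⊆ t) (hs' : s'.Nonempty) (ht' : t'.Nonempty) :
    sSup s' ≤ sInf t' ∨ sSup t' ≤ sInf s' :=
  (ordConnected_forall_le_or_forall_le hs ht hst).imp
    (fun h => csSup_le hs' fun x hx => le_csInf ht' fun y hy => h x (hs's hx) y (ht't hy))
    (fun h => csSup_le ht' fun y hy => le_csInf hs' fun x hx => h y (ht't hy) x (hs's hx))

lemma csInf_mem_and_csSup_mem_of_subset {s C : Set ℝ} (hC : IsClosed C) (hsC : s ⊆ C)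
    (hs : Bornology.IsBounded s) (hne : s.Nonempty) : sInf s ∈ C ∧ sSup s ∈ C :=
  ⟨closure_minimal hsC hC (csInf_mem_closure hne hs.bddBelow),
    closure_minimal hsC hC (csSup_mem_closure hne hs.bddAbove)⟩

lemma Ioo_csInf_csSup_subset {α : Type*} [ConditionallyCompleteLinearOrder α] {s t : Set α}
    (hst : s ⊆ t) (hs : s.Nonempty) (ht : t.OrdConnected) : Ioo (sInf s) (sSup s) ⊆ t := by
  intro y hy
  obtain ⟨u, hu, huy⟩ := exists_lt_of_csInf_lt hs hy.1
  obtain ⟨v, hv, hyv⟩ := exists_lt_of_lt_csSup hs hy.2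
  exact ht.out (hst hu) (hst hv) ⟨huy.le, hyv.le⟩

lemma exists_countable_isOpen_isConnected_sUnion_eq {X : Type*} [TopologicalSpace X]
    [LocallyConnectedSpace X] [TopologicalSpace.SeparableSpace X] {U : Set X} (hU : IsOpen U) :
    ∃ S : Set (Set X), S.Countable ∧ S.PairwiseDisjoint id ∧
      (∀ I ∈ S, IsOpen I ∧ IsConnected I) ∧ ⋃₀ S = U := by
  have hopen : ∀ I ∈ connectedComponentIn U '' U, IsOpen I ∧ IsConnected I := by
    rintro _ ⟨x, hx, rfl⟩
    exact ⟨hU.connectedComponentIn, isConnected_connectedComponentIn_iff.2 hx⟩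
  have hdisj : (connectedComponentIn U '' U).PairwiseDisjoint id := by
    rintro _ ⟨x, -, rfl⟩ _ ⟨y, -, rfl⟩ hne
    refine disjoint_left.2 fun z hzx hzy => hne ?_
    rw [connectedComponentIn_eq hzx, connectedComponentIn_eq hzy]
  refine ⟨_, hdisj.countable_of_isOpen (fun I hI => (hopen I hI).1)
    (fun I hI => (hopen I hI).2.nonempty), hdisj, hopen, ?_⟩
  refine Subset.antisymm (sUnion_subset ?_) fun x hx =>
    ⟨_, mem_image_of_mem _ hx, mem_connectedComponentIn hx⟩
  rintro _ ⟨x, -, rfl⟩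
  exact connectedComponentIn_subset U x

end OrdConnected

section LusinN

variable {a b : ℝ} {f F G : ℝ → ℝ} {C Z : Set ℝ}

lemma sum_csSup_sub_csInf_le_volume {S : Set (Set ℝ)} (hdisj : S.PairwiseDisjoint id)
    (hS : ∀ I ∈ S, IsOpen I ∧ I.OrdConnected ∧ (I ∩ C).Nonempty) (hC : Bornology.IsBounded C)
    (T : Finset S) :
    ENNReal.ofReal (∑ I ∈ T, (sSup (I.1 ∩ C) - sInf (I.1 ∩ C))) ≤ volume (⋃₀ S) := by
  have hle (I : S) : sInf (I.1 ∩ C) ≤ sSup (I.1 ∩ C) :=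
    have hbdd := hC.subset inter_subset_right
    csInf_le_csSup (hS I I.2).2.2 hbdd.bddBelow hbdd.bddAbove
  have hdisjT : (T : Set S).PairwiseDisjoint Subtype.val := fun I _ J _ hIJ =>
    hdisj I.2 J.2 (Subtype.coe_ne_coe.2 hIJ)
  calc ENNReal.ofReal (∑ I ∈ T, (sSup (I.1 ∩ C) - sInf (I.1 ∩ C)))
      = ∑ I ∈ T, volume (Ioo (sInf (I.1 ∩ C)) (sSup (I.1 ∩ C))) := by
        simp only [ENNReal.ofReal_sum_of_nonneg fun I _ => sub_nonneg.2 (hle I), Real.volume_Ioo]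
    _ ≤ ∑ I ∈ T, volume I.1 := Finset.sum_le_sum fun I _ => measure_mono <|
        have hI := hS I I.2
        Ioo_csInf_csSup_subset inter_subset_left hI.2.2 hI.2.1
    _ = volume (⋃ I ∈ T, I.1) :=
        (measure_biUnion_finset hdisjT fun I _ => (hS I I.2).1.measurableSet).symm
    _ ≤ volume (⋃₀ S) := measure_mono (iUnion₂_subset fun I _ => subset_sUnion_of_mem I.2)

-- Each component `I` of `U` that meets `C` is replaced by the hull of `I ∩ C`, which has its
-- endpoints in `C`.
lemma ACStar.exists_forall_volume_image_le (hFc : ContinuousOn F (Icc a b))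
    (hF : ACStar a b F C) (hC : IsClosed C) (hCab : C ⊆ Icc a b) {ε : ℝ} (hε : 0 < ε) :
    ∃ δ > 0, ∀ U, IsOpen U → volume U < ENNReal.ofReal δ →
      volume (F '' (U ∩ C)) ≤ ENNReal.ofReal ε := by
  obtain ⟨δ, hδ, hF⟩ := hF.exists_forall_sum_osc_lt hCab hε
  refine ⟨δ, hδ, fun U hU hUδ => ?_⟩
  obtain ⟨S₀, hcount, hdisj, hS₀, rfl⟩ := exists_countable_isOpen_isConnected_sUnion_eq hU
  let S := {I ∈ S₀ | (I ∩ C).Nonempty}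
  have hSS₀ : S ⊆ S₀ := sep_subset _ _
  have : Countable S := (hcount.mono hSS₀).to_subtype
  have hS : ∀ I ∈ S, IsOpen I ∧ I.OrdConnected ∧ (I ∩ C).Nonempty := fun I hI =>
    ⟨(hS₀ I hI.1).1, (hS₀ I hI.1).2.isPreconnected.ordConnected, hI.2⟩
  let l (I : S) : ℝ := sInf (I.1 ∩ C)
  let r (I : S) : ℝ := sSup (I.1 ∩ C)
  have hbdd (I : Set ℝ) : Bornology.IsBounded (I ∩ C) :=
    (Metric.isBounded_Icc a b).subset (inter_subset_right.trans hCab)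
  have hends (I : S) : l I ≤ r I ∧ l I ∈ C ∧ r I ∈ C :=
    ⟨csInf_le_csSup I.2.2 (hbdd I).bddBelow (hbdd I).bddAbove,
      csInf_mem_and_csSup_mem_of_subset hC inter_subset_right (hbdd I) I.2.2⟩
  have hsep : Pairwise fun I J : S => r I ≤ l J ∨ r J ≤ l I := fun I J hIJ =>
    csSup_le_csInf_or_of_ordConnected (hS I I.2).2.1 (hS J J.2).2.1
      (hdisj I.2.1 J.2.1 (Subtype.coe_ne_coe.2 hIJ)) inter_subset_left inter_subset_left
      I.2.2 J.2.2
  have hcover : F '' (⋃₀ S₀ ∩ C) ⊆ ⋃ I : S, F '' Icc (l I) (r I) := by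
    rintro _ ⟨x, ⟨⟨I, hI, hxI⟩, hxC⟩, rfl⟩
    exact mem_iUnion.2 ⟨⟨I, hI, x, hxI, hxC⟩, mem_image_of_mem F
      ⟨csInf_le (hbdd I).bddBelow ⟨hxI, hxC⟩, le_csSup (hbdd I).bddAbove ⟨hxI, hxC⟩⟩⟩
  have hosc (I : S) : volume (F '' Icc (l I) (r I)) ≤ ENNReal.ofReal (osc F (Icc (l I) (r I))) :=
    volume_image_Icc_le_osc (hFc.mono (Icc_subset_Icc (hCab (hends I).2.1).1
      (hCab (hends I).2.2).2))
  refine (measure_mono hcover).trans <| (measure_iUnion_le _).trans <|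
    (ENNReal.tsum_le_tsum hosc).trans ?_
  rw [ENNReal.tsum_eq_iSup_sum]
  refine iSup_le fun T => ?_
  rw [← ENNReal.ofReal_sum_of_nonneg fun _ _ => osc_nonneg _ _]
  refine ENNReal.ofReal_le_ofReal (hF T l r (fun I _ => hends I) (hsep.set_pairwise _) ?_).le
  refine (ENNReal.ofReal_lt_ofReal_iff hδ).1 <|
    (sum_csSup_sub_csInf_le_volume (hdisj.subset hSS₀) hS
      ((Metric.isBounded_Icc a b).subset hCab) T).trans_lt <|
    (measure_mono (sUnion_subset_sUnion hSS₀)).trans_lt hUδ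

lemma ACStar.volume_image_eq_zero (hFc : ContinuousOn F (Icc a b)) (hF : ACStar a b F C)
    (hC : IsClosed C) (hCab : C ⊆ Icc a b) (hZ : volume Z = 0) : volume (F '' (Z ∩ C)) = 0 := by
  refine nonpos_iff_eq_zero.1 (ENNReal.le_of_forall_pos_le_add fun ε hε _ => ?_)
  obtain ⟨δ, hδ, hF⟩ := hF.exists_forall_volume_image_le hFc hC hCab (NNReal.coe_pos.2 hε)
  obtain ⟨U, hZU, hU, hUδ⟩ := Z.exists_isOpen_lt_of_lt (μ := volume) (ENNReal.ofReal δ)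
    (hZ ▸ ENNReal.ofReal_pos.2 hδ)
  rw [zero_add, ← ENNReal.ofReal_coe_nnreal]
  exact (measure_mono (image_mono (inter_subset_inter_left C hZU))).trans (hF U hU hUδ)

lemma ACGStar.volume_image_eq_zero (hFc : ContinuousOn F (Icc a b)) (hF : ACGStar a b F C)
    (hZ : volume Z = 0) : volume (F '' (Z ∩ C)) = 0 := by
  obtain ⟨C, hC, rfl⟩ := hF
  rw [inter_iUnion, image_iUnion]
  exact measure_iUnion_null fun n =>
    (hC n).2.2.volume_image_eq_zero hFc (hC n).1 (hC n).2.1 hZ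

lemma volume_image_setOf_hasDerivAt_zero (F : ℝ → ℝ) :
    volume (F '' {x | HasDerivAt F 0 x}) = 0 := by
  refine addHaar_image_eq_zero_of_det_fderivWithin_eq_zero (f' := fun _ => 0) volume
    (fun x hx => ?_) fun _ _ => by simp [ContinuousLinearMap.det]
  have hzero : ContinuousLinearMap.toSpanSingleton ℝ (0 : ℝ) = 0 := by ext; simp
  exact hzero ▸ HasDerivAt.hasFDerivAt hx |>.hasFDerivWithinAt

lemma subsingleton_of_volume_eq_zero {s : Set ℝ} (hs : s.OrdConnected) (h : volume s = 0) :
    s.Subsingleton := by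
  intro x hx y hy
  have hnull : volume (uIcc x y) = 0 := measure_mono_null (hs.uIcc_subset hx hy) h
  rw [Real.volume_interval, ENNReal.ofReal_eq_zero, abs_nonpos_iff, sub_eq_zero] at hnull
  exact hnull.symm

lemma ACGStar.subsingleton_image_of_hasDerivAt_zero (hFc : ContinuousOn F (Icc a b))
    (hF : ACGStar a b F (Icc a b))
    (h : ∀ᵐ x ∂volume.restrict (Icc a b), HasDerivAt F 0 x) : (F '' Icc a b).Subsingleton := by
  refine subsingleton_of_volume_eq_zero
    (isPreconnected_Icc.image F hFc).ordConnected ?_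
  rw [ae_restrict_iff' measurableSet_Icc, ae_iff] at h
  refine measure_mono_null ?_ (measure_union_null (volume_image_setOf_hasDerivAt_zero F)
    (hF.volume_image_eq_zero hFc h))
  rw [← image_union]
  refine image_mono fun x hx => ?_
  by_cases hx' : HasDerivAt F 0 x
  exacts [.inl hx', .inr ⟨fun h => hx' (h hx), hx⟩]

lemma HasDenjoyIntegralFn.eqOn (hF : HasDenjoyIntegralFn a b f F)
    (hG : HasDenjoyIntegralFn a b f G) : EqOn F G (Icc a b) := by
  obtain ⟨hFc, hFa, hFac, hFd⟩ := hF
  obtain ⟨hGc, hGa, hGac, hGd⟩ := hG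
  have hderiv : ∀ᵐ x ∂volume.restrict (Icc a b), HasDerivAt (fun x => F x - G x) 0 x := by
    filter_upwards [hFd, hGd] with x hFx hGx
    simpa only [sub_self] using hFx.fun_sub hGx
  have hconst := (ACGStar.sub hFc hGc hFac hGac).subsingleton_image_of_hasDerivAt_zero
    (hFc.sub hGc) hderiv
  intro x hx
  have ha : a ∈ Icc a b := left_mem_Icc.2 (hx.1.trans hx.2)
  have hxa : F x - G x = F a - G a := hconst (mem_image_of_mem _ hx) (mem_image_of_mem _ ha)
  rwa [hFa, hGa, sub_self, sub_eq_zero] at hxa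

lemma HasDenjoyIntegralFn.restrict {x : ℝ} (hF : HasDenjoyIntegralFn a b f F)
    (hx : x ≤ b) : HasDenjoyIntegralFn a x f F := by
  obtain ⟨hFc, hFa, hFac, hFd⟩ := hF
  have hsub : Icc a x ⊆ Icc a b := Icc_subset_Icc_right hx
  refine ⟨hFc.mono hsub, hFa, ?_, ae_restrict_of_ae_restrict_of_subset hsub hFd⟩
  have := hFac.inter_isClosed (isClosed_Icc (a := a) (b := x))
  rw [inter_eq_right.2 hsub] at this
  exact this.change_interval subset_rfl

lemma HasDenjoyIntegralFn.denjoyIntegral_eq (hab : a ≤ b) (hF : HasDenjoyIntegralFn a b f F) :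
    denjoyIntegral a b f = F b := by
  have hf : DenjoyIntegrable a b f := ⟨F, hF⟩
  rw [denjoyIntegral, dif_pos hf]
  exact (Classical.choose_spec hf).eqOn hF (right_mem_Icc.2 hab)

end LusinN

section AbsolutelyContinuous

variable {a b : ℝ}

lemma exists_forall_finset_sum_dist_lt {X ι : Type*} [PseudoMetricSpace X] {F : ℝ → X}
    (hF : AbsolutelyContinuousOnInterval F a b) {ε : ℝ} (hε : 0 < ε) :
    ∃ δ > 0, ∀ (T : Finset ι) (q : ι → ℝ × ℝ),
      (∀ i ∈ T, (q i).1 ∈ uIcc a b ∧ (q i).2 ∈ uIcc a b) →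
      (T : Set ι).PairwiseDisjoint (fun i => uIoc (q i).1 (q i).2) →
      ∑ i ∈ T, dist (q i).1 (q i).2 < δ → ∑ i ∈ T, dist (F (q i).1) (F (q i).2) < ε := by
  obtain ⟨δ, hδ, hF⟩ := (absolutelyContinuousOnInterval_iff F a b).1 hF ε hε
  refine ⟨δ, hδ, fun T q hmem hdisj hlen => ?_⟩
  rcases T.eq_empty_or_nonempty with rfl | ⟨i₀, -⟩
  · simpa using hε
  have : Nonempty ι := ⟨i₀⟩
  obtain ⟨e, hmaps, hinj, hsurj⟩ := (Finset.finite_toSet (.range T.card)).exists_bijOn_of_encard_eq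
    (t := (T : Set ι)) (by simp only [encard_coe_eq_coe_finsetCard, Finset.card_range])
  have hsum (u : ι → ℝ) : ∑ k ∈ .range T.card, u (e k) = ∑ i ∈ T, u i :=
    Finset.sum_nbij e hmaps hinj hsurj fun _ _ => rfl
  rw [← hsum] at hlen ⊢
  exact hF (T.card, q ∘ e) ⟨fun k hk => hmem _ (hmaps hk),
    fun k hk m hm hkm => hdisj (hmaps hk) (hmaps hm) (hinj.ne hk hm hkm)⟩ hlen

lemma acStar_of_absolutelyContinuousOnInterval {F : ℝ → ℝ}
    (hF : AbsolutelyContinuousOnInterval F a b) : ACStar a b F (Icc a b) := by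
  intro ε hε
  obtain ⟨δ, hδ, hsum⟩ := exists_forall_finset_sum_dist_lt (ι := ℝ × ℝ) hF hε
  refine ⟨δ, hδ, fun D ⟨_, hmem, hsep⟩ hlen => ?_⟩
  have hsub : ∀ p ∈ D, Icc p.1 p.2 ⊆ uIcc a b := fun p hp =>
    (hmem p hp).2.2.2.trans Icc_subset_uIcc
  have hextr : ∀ p ∈ D, ∃ q : ℝ × ℝ, q.1 ∈ Icc p.1 p.2 ∧ q.2 ∈ Icc p.1 p.2 ∧
      osc F (Icc p.1 p.2) ≤ dist (F q.1) (F q.2) := fun p hp =>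
    have ⟨x, hx, y, hy, h⟩ :=
      exists_osc_le_abs_sub (hmem p hp).1 (hF.continuousOn.mono (hsub p hp))
    ⟨(x, y), hx, hy, h⟩
  choose! q hq₁ hq₂ hosc using hextr
  refine (Finset.sum_le_sum hosc).trans_lt (hsum D q
    (fun p hp => ⟨hsub p hp (hq₁ p hp), hsub p hp (hq₂ p hp)⟩) (fun p hp p' hp' hne => ?_)
    ((Finset.sum_le_sum fun p hp => Real.dist_le_of_mem_Icc (hq₁ p hp) (hq₂ p hp)).trans_lt hlen))
  have hIoc : ∀ p ∈ D, uIoc (q p).1 (q p).2 ⊆ Ioc p.1 p.2 := fun p hp =>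
    Ioc_subset_Ioc (le_inf (hq₁ p hp).1 (hq₂ p hp).1) (sup_le (hq₁ p hp).2 (hq₂ p hp).2)
  refine Disjoint.mono (hIoc p hp) (hIoc p' hp') (Ioc_disjoint_Ioc.2 ?_)
  rcases hsep hp hp' hne with h | h
  exacts [(min_le_left _ _).trans (h.trans (le_max_right _ _)),
    (min_le_right _ _).trans (h.trans (le_max_left _ _))]

end AbsolutelyContinuous

section Derivative

lemma ae_hasDerivAt_zero_of_mutuallySingular {E : Type*} [NormedAddCommGroup E] [NormedSpace ℝ E]
    {F : ℝ → E} {s : Set ℝ} {ρ : Measure ℝ} [IsLocallyFiniteMeasure ρ] (hρ : ρ ⟂ₘ volume)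
    (hF : ∀ x ∈ s, ∀ y, ‖F y - F x‖ₑ ≤ ρ (Metric.closedBall x ‖y - x‖)) :
    ∀ᵐ x, x ∈ s → HasDerivAt F 0 x := by
  filter_upwards [Besicovitch.ae_tendsto_rnDeriv ρ volume, hρ.rnDeriv_ae_eq_zero]
    with x hx hx₀ hxs
  rw [hx₀] at hx
  rw [hasDerivAt_iff_isLittleO, Asymptotics.isLittleO_iff]
  intro η hη
  obtain ⟨r, hr, hball⟩ := Metric.eventually_nhds_iff.1 <| eventually_nhdsWithin_iff.1 <|
    hx.eventually_lt_const (u := ENNReal.ofReal (η / 2)) (ENNReal.ofReal_pos.2 (half_pos hη))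
  refine Metric.eventually_nhds_iff.2 ⟨r, hr, fun y hy => ?_⟩
  rw [smul_zero, sub_zero]
  rcases eq_or_ne y x with rfl | hne
  · simp only [sub_self, norm_zero, mul_zero, le_refl]
  have hpos : 0 < ‖y - x‖ := norm_pos_iff.2 (sub_ne_zero.2 hne)
  have hρball : ρ (Metric.closedBall x ‖y - x‖) ≤ ENNReal.ofReal (η * ‖y - x‖) := by
    have hlt := hball (y := ‖y - x‖) (by rwa [dist_zero_right, norm_norm, ← dist_eq_norm]) hpos
    rw [Real.volume_closedBall] at hlt
    refine ((ENNReal.div_le_iff (ENNReal.ofReal_pos.2 (by positivity)).ne'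
      ENNReal.ofReal_ne_top).1 hlt.le).trans_eq ?_
    rw [← ENNReal.ofReal_mul (by positivity)]
    ring_nf
  rw [← ENNReal.ofReal_le_ofReal_iff (by positivity), ofReal_norm]
  exact (hF x hxs y).trans hρball

end Derivative

section EndpointMeasure

open Measure ENNReal

variable {ι : Type*} {c d : ι → ℝ} {w : ι → ℝ≥0∞}

/-- The purely atomic measure putting mass `w i` at each endpoint of the gap `(c i, d i)`. Being
singular, it bounds increments of functions whose derivative vanishes almost everywhere. -/
def endpointMeasure (c d : ι → ℝ) (w : ι → ℝ≥0∞) : Measure ℝ :=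
  Measure.sum fun i => w i • (dirac (c i) + dirac (d i))

lemma isFiniteMeasure_endpointMeasure (hw : ∑' i, w i ≠ ∞) :
    IsFiniteMeasure (endpointMeasure c d w) := by
  constructor
  simp only [endpointMeasure, sum_apply _ MeasurableSet.univ, Measure.smul_apply,
    Measure.add_apply, measure_univ, smul_eq_mul, ENNReal.tsum_mul_right]
  exact mul_lt_top hw.lt_top (add_lt_top.2 ⟨one_lt_top, one_lt_top⟩)

lemma endpointMeasure_mutuallySingular [Countable ι] (c d : ι → ℝ) (w : ι → ℝ≥0∞)
    (μ : Measure ℝ) [NullSingletonClass μ] : endpointMeasure c d w ⟂ₘ μ :=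
  MutuallySingular.sum_left.2 fun i =>
    ((mutuallySingular_dirac (c i) μ).add_left (mutuallySingular_dirac (d i) μ)).smul (w i)

lemma tsum_indicator_le_endpointMeasure {s : Set ι} {B : Set ℝ}
    (h : ∀ i ∈ s, c i ∈ B ∨ d i ∈ B) : ∑' i, s.indicator w i ≤ endpointMeasure c d w B := by
  have hone : ∀ i ∈ s, 1 ≤ (dirac (c i) + dirac (d i)) B := fun i hi => by
    rw [Measure.add_apply]
    rcases h i hi with h | h
    · exact (dirac_apply_of_mem h).ge.trans le_self_add
    · exact (dirac_apply_of_mem h).ge.trans le_add_self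
  exact (ENNReal.tsum_le_tsum (indicator_le fun i hi =>
    le_mul_of_one_le_right zero_le (hone i hi))).trans (le_sum_apply _ B)

end EndpointMeasure

section GapSum

open scoped Topology

lemma projIcc_eq_of_disjoint_uIoo {α : Type*} [LinearOrder α] [DenselyOrdered α] {c d x y : α}
    (hcd : c ≤ d) (h : Disjoint (Ioo c d) (uIoo x y)) : projIcc c d hcd x = projIcc c d hcd y := by
  wlog hxy : x ≤ y generalizing x y
  · exact (this (uIoo_comm x y ▸ h) (le_of_not_ge hxy)).symm
  rw [uIoo_of_le hxy, Ioo_disjoint_Ioo] at h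
  simp only [Subtype.ext_iff, coe_projIcc]
  grind

variable {ι : Type*} {c d : ι → ℝ} {w : ι → ℝ} {Φ : ι → ℝ → ℝ} {x y : ℝ}

/-- The sum of the functions `Φ i` on `[c i, d i]`, each extended to `ℝ` by the constants
`Φ i (c i)` and `Φ i (d i)`. -/
def gapSum (hcd : ∀ i, c i ≤ d i) (Φ : ι → ℝ → ℝ) (x : ℝ) : ℝ :=
  ∑' i, Φ i (projIcc (c i) (d i) (hcd i) x)

/-- The indices of the open intervals `(c i, d i)` that meet the open interval between `x`
and `y`; only these contribute to an increment of `gapSum` from `x` to `y`. -/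
def gapsMeeting (c d : ι → ℝ) (x y : ℝ) : Set ι :=
  {i | ¬Disjoint (Ioo (c i) (d i)) (uIoo x y)}

lemma nonneg_of_forall_abs_sub_le {φ : ℝ → ℝ} {p q W : ℝ} (hpq : p ≤ q)
    (hφ : ∀ x ∈ Icc p q, ∀ y ∈ Icc p q, |φ x - φ y| ≤ W) : 0 ≤ W :=
  (abs_nonneg _).trans (hφ p (left_mem_Icc.2 hpq) p (left_mem_Icc.2 hpq))

lemma gapsMeeting_mono {x' y' : ℝ} (h : uIoo x y ⊆ uIoo x' y') :
    gapsMeeting c d x y ⊆ gapsMeeting c d x' y' :=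
  fun _ hi hdisj => hi (hdisj.mono_right h)

lemma endpoint_mem_uIcc_of_mem_gapsMeeting {i : ι} (hi : i ∈ gapsMeeting c d x y)
    (hx : x ∉ Ioo (c i) (d i)) : c i ∈ uIcc x y ∨ d i ∈ uIcc x y := by
  obtain ⟨z, hz, hz'⟩ := not_disjoint_iff.1 hi
  rw [mem_uIcc, mem_uIcc]
  grind [uIoo]

lemma bounds_of_mem_gapsMeeting {i : ι} (hi : i ∈ gapsMeeting c d x y) (hxy : x ≤ y)
    (hx : x ∉ Ioo (c i) (d i)) (hy : y ∉ Ioo (c i) (d i)) :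
    x ≤ c i ∧ c i < d i ∧ d i ≤ y := by
  obtain ⟨z, hz, hz'⟩ := not_disjoint_iff.1 hi
  rw [uIoo_of_le hxy] at hz'
  grind

variable {hcd : ∀ i, c i ≤ d i}

lemma gapSum_eq_zero (hΦ₀ : ∀ i, Φ i (c i) = 0) (hx : ∀ i, Ioo (c i) (d i) ⊆ Ioi x) :
    gapSum hcd Φ x = 0 := by
  have hproj (i : ι) : projIcc (c i) (d i) (hcd i) x = projIcc (c i) (d i) (hcd i) (c i) :=
    projIcc_eq_of_disjoint_uIoo (hcd i) <| disjoint_left.2 fun z hz hz' =>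
      (lt_max_iff.1 hz'.2).elim (hx i hz).not_gt hz.1.not_gt
  simp only [gapSum, hproj, projIcc_left, hΦ₀, tsum_zero]

lemma gapSum_eq_tsum_apply_right (hx : ∀ i, Ioo (c i) (d i) ⊆ Iio x) :
    gapSum hcd Φ x = ∑' i, Φ i (d i) := by
  have hproj (i : ι) : projIcc (c i) (d i) (hcd i) x = projIcc (c i) (d i) (hcd i) (d i) :=
    projIcc_eq_of_disjoint_uIoo (hcd i) <| disjoint_left.2 fun z hz hz' =>
      (min_lt_iff.1 hz'.1).elim (hx i hz).not_gt hz.2.not_gt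
  simp only [gapSum, hproj, projIcc_right]

lemma exists_forall_tsum_indicator_lt {ι : Type*} {w ℓ : ι → ℝ} (hw : Summable w)
    (hw₀ : ∀ i, 0 ≤ w i) {ε : ℝ} (hε : 0 < ε) :
    ∃ δ > 0, ∀ s : Set ι, (∀ i ∈ s, 0 < ℓ i ∧ ℓ i < δ) → ∑' i, s.indicator w i < ε := by
  obtain ⟨N, hN⟩ := ((tendsto_tsum_compl_atTop_zero w).eventually_lt_const hε).exists
  obtain ⟨δ, hδN, hδ⟩ : ∃ δ, (∀ i ∈ N, 0 < ℓ i → δ ≤ ℓ i) ∧ 0 < δ := by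
    have : ∀ᶠ δ in 𝓝[>] (0 : ℝ), ∀ i ∈ N, 0 < ℓ i → δ ≤ ℓ i := by
      refine (Filter.eventually_all_finset N).2 fun i _ => ?_
      by_cases hi : 0 < ℓ i
      · filter_upwards [Ioc_mem_nhdsGT hi] with δ hδ _ using hδ.2
      · exact .of_forall fun δ h => absurd h hi
    exact (this.and self_mem_nhdsWithin).exists
  refine ⟨δ, hδ, fun s hs => lt_of_le_of_lt ?_ hN⟩
  have hsN : s ⊆ {i | i ∉ N} := fun i hi hiN =>
    (hδN i hiN (hs i hi).1).not_gt (hs i hi).2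
  exact ((hw.indicator _).tsum_le_tsum (indicator_le_indicator_of_subset hsN hw₀)
    (hw.indicator _)).trans_eq (tsum_subtype {i | i ∉ N} w).symm

variable (hΦ : ∀ i, ∀ x ∈ Icc (c i) (d i), ∀ y ∈ Icc (c i) (d i), |Φ i x - Φ i y| ≤ w i)
  (hΦ₀ : ∀ i, Φ i (c i) = 0) (hw : Summable w)

include hΦ in
lemma abs_sub_projIcc_le_indicator (x y : ℝ) (i : ι) :
    |Φ i (projIcc (c i) (d i) (hcd i) x) - Φ i (projIcc (c i) (d i) (hcd i) y)| ≤
      (gapsMeeting c d x y).indicator w i := by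
  by_cases hi : i ∈ gapsMeeting c d x y
  · rw [indicator_of_mem hi]
    exact hΦ i _ (Subtype.prop _) _ (Subtype.prop _)
  · rw [indicator_of_notMem hi, projIcc_eq_of_disjoint_uIoo (hcd i) (not_not.1 hi), sub_self,
      abs_zero]

include hΦ hΦ₀ hw

lemma summable_apply_projIcc (x : ℝ) :
    Summable fun i => Φ i (projIcc (c i) (d i) (hcd i) x) :=
  hw.of_norm_bounded fun i => by
    simpa only [hΦ₀, sub_zero] using! hΦ i _ (Subtype.prop _) _ (left_mem_Icc.2 (hcd i))

lemma continuous_gapSum (hΦc : ∀ i, ContinuousOn (Φ i) (Icc (c i) (d i))) :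
    Continuous (gapSum hcd Φ) :=
  continuous_tsum (fun i => (hΦc i).comp_continuous
    (continuous_subtype_val.comp continuous_projIcc) fun _ => Subtype.prop _) hw fun i x => by
    simpa only [hΦ₀, sub_zero] using! hΦ i _ (Subtype.prop _) _ (left_mem_Icc.2 (hcd i))

lemma abs_gapSum_sub_le (x y : ℝ) :
    |gapSum hcd Φ x - gapSum hcd Φ y| ≤ ∑' i, (gapsMeeting c d x y).indicator w i := by
  rw [gapSum, gapSum, ← (summable_apply_projIcc hΦ hΦ₀ hw x).tsum_sub
    (summable_apply_projIcc hΦ hΦ₀ hw y)]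
  exact tsum_of_norm_bounded (hw.indicator (gapsMeeting c d x y)).hasSum
    fun i => (Real.norm_eq_abs _).trans_le
      (abs_sub_projIcc_le_indicator hΦ x y i)

lemma osc_gapSum_le (hxy : x ≤ y) :
    osc (gapSum hcd Φ) (Icc x y) ≤ ∑' i, (gapsMeeting c d x y).indicator w i := by
  have hw₀ (i : ι) : 0 ≤ w i := nonneg_of_forall_abs_sub_le (hcd i) (hΦ i)
  refine osc_le (tsum_nonneg fun i => indicator_nonneg (fun i _ => hw₀ i) i)
    fun p hp q hq => (abs_gapSum_sub_le hΦ hΦ₀ hw p q).trans ?_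
  have hsub : uIoo p q ⊆ uIoo x y :=
    uIoo_of_le hxy ▸ Ioo_subset_Ioo (le_inf hp.1 hq.1) (sup_le hp.2 hq.2)
  exact (hw.indicator _).tsum_le_tsum
    (indicator_le_indicator_of_subset (gapsMeeting_mono hsub) hw₀) (hw.indicator _)

lemma acStar_gapSum (a b : ℝ) {C : Set ℝ} (hC : ∀ i, Disjoint C (Ioo (c i) (d i))) :
    ACStar a b (gapSum hcd Φ) C := by
  have hw₀ (i : ι) : 0 ≤ w i := nonneg_of_forall_abs_sub_le (hcd i) (hΦ i)
  intro ε hε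
  obtain ⟨δ, hδ, hshort⟩ := exists_forall_tsum_indicator_lt (ℓ := fun i => d i - c i) hw hw₀ hε
  refine ⟨δ, hδ, fun D ⟨_, hmem, hsep⟩ hlen => ?_⟩
  have hbounds : ∀ p ∈ D, ∀ i ∈ gapsMeeting c d p.1 p.2, p.1 ≤ c i ∧ c i < d i ∧ d i ≤ p.2 :=
    fun p hp i hi =>
      have ⟨hle, hp₁, hp₂, _⟩ := hmem p hp
      bounds_of_mem_gapsMeeting hi hle ((hC i).notMem_of_mem_left hp₁)
        ((hC i).notMem_of_mem_left hp₂)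
  have hdisj : (D : Set (ℝ × ℝ)).PairwiseDisjoint fun p => gapsMeeting c d p.1 p.2 := by
    refine fun p hp q hq hpq => disjoint_left.2 fun i hip hiq => ?_
    have := hbounds p hp i hip
    have := hbounds q hq i hiq
    rcases hsep hp hq hpq <;> linarith
  calc ∑ p ∈ D, osc (gapSum hcd Φ) (Icc p.1 p.2)
      ≤ ∑ p ∈ D, ∑' i, (gapsMeeting c d p.1 p.2).indicator w i :=
        Finset.sum_le_sum fun p hp => osc_gapSum_le hΦ hΦ₀ hw (hmem p hp).1
    _ = ∑' i, (⋃ p ∈ D, gapsMeeting c d p.1 p.2).indicator w i := by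
        rw [← Summable.tsum_finsetSum fun p _ => hw.indicator _,
          Finset.indicator_biUnion D _ hdisj]
    _ < ε := hshort _ fun i hi => by
        obtain ⟨p, hp, hip⟩ := mem_iUnion₂.1 hi
        have ⟨hc, hlt, hd⟩ := hbounds p hp i hip
        have : p.2 - p.1 ≤ ∑ p ∈ D, (p.2 - p.1) :=
          Finset.single_le_sum (f := fun p : ℝ × ℝ => p.2 - p.1)
            (fun q hq => sub_nonneg.2 (hmem q hq).1) hp
        exact ⟨sub_pos.2 hlt, by linarith⟩

lemma ae_hasDerivAt_gapSum [Countable ι] :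
    ∀ᵐ x, x ∈ (⋃ i, Ioo (c i) (d i))ᶜ → HasDerivAt (gapSum hcd Φ) 0 x := by
  let v (i : ι) : ENNReal := ENNReal.ofReal (w i)
  have : IsFiniteMeasure (endpointMeasure c d v) :=
    isFiniteMeasure_endpointMeasure hw.tsum_ofReal_ne_top
  refine ae_hasDerivAt_zero_of_mutuallySingular (endpointMeasure_mutuallySingular c d v volume)
    fun x hx y => ?_
  have hw₀ (i : ι) : 0 ≤ w i := nonneg_of_forall_abs_sub_le (hcd i) (hΦ i)
  calc ‖gapSum hcd Φ y - gapSum hcd Φ x‖ₑ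
      = ENNReal.ofReal |gapSum hcd Φ x - gapSum hcd Φ y| := by
        rw [abs_sub_comm, ← Real.norm_eq_abs, ofReal_norm]
    _ ≤ ENNReal.ofReal (∑' i, (gapsMeeting c d x y).indicator w i) :=
        ENNReal.ofReal_le_ofReal (abs_gapSum_sub_le hΦ hΦ₀ hw x y)
    _ = ∑' i, (gapsMeeting c d x y).indicator v i := by
        rw [ENNReal.ofReal_tsum_of_nonneg (indicator_nonneg fun i _ => hw₀ i) (hw.indicator _)]
        exact tsum_congr fun i => (congrFun (indicator_comp_of_zero ENNReal.ofReal_zero) i).symm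
    _ ≤ endpointMeasure c d v (Metric.closedBall x ‖y - x‖) :=
        tsum_indicator_le_endpointMeasure fun i hi => by
          have hball : uIcc x y ⊆ Metric.closedBall x ‖y - x‖ := fun z hz =>
            abs_sub_left_of_mem_uIcc hz
          exact (endpoint_mem_uIcc_of_mem_gapsMeeting hi fun h => hx (mem_iUnion_of_mem i h)).imp
            (@hball _) (@hball _)

lemma gapSum_sub_gapSum (hdisj : Pairwise fun i j => Disjoint (Ioo (c i) (d i)) (Ioo (c j) (d j)))
    {i : ι} (hx : x ∈ Icc (c i) (d i)) (hy : y ∈ Icc (c i) (d i)) :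
    gapSum hcd Φ x - gapSum hcd Φ y = Φ i x - Φ i y := by
  have hother : ∀ j ≠ i,
      Φ j (projIcc (c j) (d j) (hcd j) x) - Φ j (projIcc (c j) (d j) (hcd j) y) = 0 := by
    intro j hj
    have hsub : uIoo x y ⊆ Ioo (c i) (d i) :=
      Ioo_subset_Ioo (le_inf hx.1 hy.1) (sup_le hx.2 hy.2)
    rw [projIcc_eq_of_disjoint_uIoo (hcd j) ((hdisj hj).mono_right hsub), sub_self]
  rw [gapSum, gapSum, ← (summable_apply_projIcc hΦ hΦ₀ hw x).tsum_sub
    (summable_apply_projIcc hΦ hΦ₀ hw y), tsum_eq_single i hother, projIcc_of_mem _ hx,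
    projIcc_of_mem _ hy]

end GapSum

section Gluing

variable {ι : Type*} [Countable ι] {a b : ℝ} {c d : ι → ℝ} {f F : ℝ → ℝ} {Φ : ι → ℝ → ℝ}

lemma acgStar_of_gaps (hgaps : ∀ i, Ioo (c i) (d i) ⊆ Icc a b)
    (hF : ACStar a b F (Icc a b \ ⋃ i, Ioo (c i) (d i)))
    (hFgap : ∀ i, ACGStar (c i) (d i) F (Icc (c i) (d i))) : ACGStar a b F (Icc a b) := by
  have hclosed : IsClosed (Icc a b \ ⋃ i, Ioo (c i) (d i)) :=
    isClosed_Icc.sdiff (isOpen_iUnion fun _ => isOpen_Ioo)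
  have hsub (i : {i // c i < d i}) : Icc (c i) (d i) ⊆ Icc a b :=
    closure_Ioo i.2.ne ▸ closure_minimal (hgaps i) isClosed_Icc
  have hcover : Icc a b = (Icc a b \ ⋃ i, Ioo (c i) (d i)) ∪
      ⋃ i : {i // c i < d i}, Icc (c i) (d i) := by
    refine Subset.antisymm (fun x hx => ?_) (union_subset sdiff_subset (iUnion_subset hsub))
    by_cases hxU : x ∈ ⋃ i, Ioo (c i) (d i)
    · obtain ⟨i, hi⟩ := mem_iUnion.1 hxU
      exact .inr (mem_iUnion.2 ⟨⟨i, hi.1.trans hi.2⟩, Ioo_subset_Icc_self hi⟩)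
    · exact .inl ⟨hx, hxU⟩
  rw [hcover]
  exact (hF.acgStar hclosed sdiff_subset).union
    (.iUnion fun i => (hFgap i).change_interval (hsub i))

lemma ae_hasDerivAt_of_gaps
    (hFd : ∀ᵐ x, x ∈ Icc a b \ ⋃ i, Ioo (c i) (d i) → HasDerivAt F (f x) x)
    (hΦd : ∀ i, ∀ᵐ x ∂volume.restrict (Icc (c i) (d i)), HasDerivAt (Φ i) (f x) x)
    (hFΦ : ∀ i, ∀ x ∈ Icc (c i) (d i), ∀ y ∈ Icc (c i) (d i), F x - F y = Φ i x - Φ i y) :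
    ∀ᵐ x ∂volume.restrict (Icc a b), HasDerivAt F (f x) x := by
  simp only [ae_restrict_iff' measurableSet_Icc, ← ae_all_iff] at hΦd ⊢
  filter_upwards [hFd, hΦd] with x hxF hxΦ hx
  by_cases hxU : x ∈ ⋃ i, Ioo (c i) (d i)
  · obtain ⟨i, hi⟩ := mem_iUnion.1 hxU
    have hi' := Ioo_subset_Icc_self hi
    refine ((hxΦ i hi').add_const (F x - Φ i x)).congr_of_eventuallyEq ?_
    filter_upwards [Icc_mem_nhds hi.1 hi.2] with y hy
    linarith [hFΦ i y hy x hi']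
  · exact hxF ⟨hx, hxU⟩

lemma HasDenjoyIntegralFn.of_gaps (hgaps : ∀ i, Ioo (c i) (d i) ⊆ Icc a b)
    (hFc : ContinuousOn F (Icc a b)) (hFa : F a = 0)
    (hFac : ACStar a b F (Icc a b \ ⋃ i, Ioo (c i) (d i)))
    (hFd : ∀ᵐ x, x ∈ Icc a b \ ⋃ i, Ioo (c i) (d i) → HasDerivAt F (f x) x)
    (hΦ : ∀ i, HasDenjoyIntegralFn (c i) (d i) f (Φ i))
    (hFΦ : ∀ i, ∀ x ∈ Icc (c i) (d i), ∀ y ∈ Icc (c i) (d i), F x - F y = Φ i x - Φ i y) :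
    HasDenjoyIntegralFn a b f F :=
  ⟨hFc, hFa, acgStar_of_gaps hgaps hFac fun i => (hΦ i).2.2.1.congr (hFΦ i),
    ae_hasDerivAt_of_gaps hFd (fun i => (hΦ i).2.2.2) hFΦ⟩

end Gluing

section StepLemma

variable {a b : ℝ} {f : ℝ → ℝ} {K : Set ℝ}

lemma integral_sub_integral_eq_zero_of_eqOn {E : Type*} [NormedAddCommGroup E] [NormedSpace ℝ E]
    {g : ℝ → E} {p q x y : ℝ} (hg : ∀ u v, IntervalIntegrable g volume u v)
    (h : EqOn g 0 (Ioo p q)) (hx : x ∈ Icc p q) (hy : y ∈ Icc p q) :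
    (∫ t in a..x, g t) - ∫ t in a..y, g t = 0 := by
  have hsub : uIoo y x ⊆ Ioo p q := Ioo_subset_Ioo (le_inf hy.1 hx.1) (sup_le hy.2 hx.2)
  rw [intervalIntegral.integral_interval_sub_left (hg a x) (hg a y),
    intervalIntegral.integral_congr_uIoo (h.mono hsub)]
  exact intervalIntegral.integral_zero

variable {ι : Type*} {c d : ι → ℝ} {hcd : ∀ i, c i ≤ d i} {Φ : ι → ℝ → ℝ}

lemma hasDenjoyIntegralFn_integral_add_gapSum [Countable ι] (hK : MeasurableSet K)
    (hdisj : Pairwise fun i j => Disjoint (Ioo (c i) (d i)) (Ioo (c j) (d j)))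
    (hunion : ⋃ i, Ioo (c i) (d i) = Ioo a b \ K) (hf : IntegrableOn f K)
    (hΦ : ∀ i, HasDenjoyIntegralFn (c i) (d i) f (Φ i))
    (hsum : Summable fun i => osc (Φ i) (Icc (c i) (d i))) :
    HasDenjoyIntegralFn a b f fun x => (∫ t in a..x, K.indicator f t) + gapSum hcd Φ x := by
  have hgaps (i : ι) : Ioo (c i) (d i) ⊆ Ioo a b \ K :=
    hunion ▸ subset_iUnion_of_subset i subset_rfl
  have hg : Integrable (K.indicator f) := hf.integrable_indicator hK
  have hosc (i : ι) : ∀ x ∈ Icc (c i) (d i), ∀ y ∈ Icc (c i) (d i),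
      |Φ i x - Φ i y| ≤ osc (Φ i) (Icc (c i) (d i)) :=
    fun x hx y hy => abs_sub_le_osc (hΦ i).1 hx hy
  have hΦ₀ (i : ι) : Φ i (c i) = 0 := (hΦ i).2.1
  have hLc : Continuous fun x => ∫ t in a..x, K.indicator f t :=
    intervalIntegral.continuous_primitive (fun _ _ => hg.intervalIntegrable) a
  have hSc := continuous_gapSum (hcd := hcd) hosc hΦ₀ hsum fun i => (hΦ i).1
  have hLac := acStar_of_absolutelyContinuousOnInterval <|
    (hg.intervalIntegrable (a := a) (b := b)).absolutelyContinuousOnInterval_intervalIntegral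
      left_mem_uIcc
  refine .of_gaps (fun i => (hgaps i).trans (sdiff_subset.trans Ioo_subset_Icc_self))
    (hLc.add hSc).continuousOn ?_ ?_ ?_ hΦ fun i x hx y hy => ?_
  · rw [intervalIntegral.integral_same, zero_add]
    exact gapSum_eq_zero hΦ₀ fun i x hx => (hgaps i hx).1.1
  · exact .add hLc.continuousOn hSc.continuousOn (hLac.mono sdiff_subset sdiff_subset) <|
      acStar_gapSum hosc hΦ₀ hsum a b fun i =>
        disjoint_sdiff_left.mono_right (subset_iUnion_of_subset i subset_rfl)
  · have hends : ∀ᵐ x : ℝ, x ∉ ({a, b} : Set ℝ) :=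
      measure_eq_zero_iff_ae_notMem.1 ((toFinite _).measure_zero volume)
    filter_upwards [hends, ae_hasDerivAt_gapSum (hcd := hcd) hosc hΦ₀ hsum,
      LocallyIntegrable.ae_hasDerivAt_integral hg.locallyIntegrable] with x hxab hxS hxL hx
    have hxK : x ∈ K := by
      by_contra hxK
      obtain ⟨hxa, hxb⟩ := not_or.1 hxab
      exact hx.2 (hunion ▸ ⟨⟨lt_of_le_of_ne hx.1.1 (Ne.symm hxa), lt_of_le_of_ne hx.1.2 hxb⟩, hxK⟩)
    simpa only [indicator_of_mem hxK, add_zero] using (hxL a).fun_add (hxS hx.2)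
  · rw [add_sub_add_comm, integral_sub_integral_eq_zero_of_eqOn (fun _ _ => hg.intervalIntegrable)
      (fun t ht => indicator_of_notMem (hgaps i ht).2 f) hx hy, zero_add]
    exact gapSum_sub_gapSum hosc hΦ₀ hsum hdisj hx hy

lemma integral_add_gapSum_right (hab : a ≤ b) (hK : MeasurableSet K) (hKab : K ⊆ Icc a b)
    (hgaps : ∀ i, Ioo (c i) (d i) ⊆ Iio b) :
    (∫ t in a..b, K.indicator f t) + gapSum hcd Φ b = (∫ x in K, f x) + ∑' i, Φ i (d i) := by
  rw [gapSum_eq_tsum_apply_right hgaps, intervalIntegral.integral_of_le hab,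
    ← integral_Icc_eq_integral_Ioc, setIntegral_indicator hK, inter_eq_right.2 hKab]

end StepLemma

/-- The Step Lemma. -/
theorem step_lemma (a b : ℝ) (hab : a < b) (f : ℝ → ℝ) (hf : Measurable f)
    (K : Set ℝ) (hK : IsClosed K) (hKsub : K ⊆ Icc a b)
    (c d : ℕ → ℝ) (hcd : ∀ n, c n ≤ d n)
    (hdisj : Pairwise fun m n => Disjoint (Ioo (c m) (d m)) (Ioo (c n) (d n)))
    (hunion : (⋃ n, Ioo (c n) (d n)) = Ioo a b \ K)
    (hint : IntegrableOn f K volume)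
    (hden : ∀ n, DenjoyIntegrable (c n) (d n) f)
    (hsum : Summable fun n => osc (fun x => denjoyIntegral (c n) x f) (Icc (c n) (d n))) :
    DenjoyIntegrable a b f ∧
    denjoyIntegral a b f = (∫ x in K, f x) + ∑' n, denjoyIntegral (c n) (d n) f := by
  choose Φ hΦ using hden
  have hval (n : ℕ) {x : ℝ} (hx : x ∈ Icc (c n) (d n)) : denjoyIntegral (c n) x f = Φ n x :=
    ((hΦ n).restrict hx.2).denjoyIntegral_eq hx.1
  have hosc (n : ℕ) : osc (fun x => denjoyIntegral (c n) x f) (Icc (c n) (d n)) =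
      osc (Φ n) (Icc (c n) (d n)) :=
    osc_congr fun x hx y hy => by rw [hval n hx, hval n hy]
  simp only [hosc] at hsum
  have hF := hasDenjoyIntegralFn_integral_add_gapSum (hcd := hcd) hK.measurableSet hdisj hunion
    hint hΦ hsum
  have hgaps (n : ℕ) : Ioo (c n) (d n) ⊆ Iio b := fun x hx =>
    (hunion.subset (mem_iUnion_of_mem n hx)).1.2
  refine ⟨⟨_, hF⟩, ?_⟩
  rw [hF.denjoyIntegral_eq hab.le, integral_add_gapSum_right hab.le hK.measurableSet hKsub hgaps]
  simp only [hval _ (right_mem_Icc.2 (hcd _))]
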